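/- arXiv:2105.01320 — 2 statements merged into one kernel-verified Lean document; each statement's English description precedes it below -/
import Mathlib

section
/- Let E be a finite-dimensional real normed vector space, d > 0, μ a Borel measure on E that is finite on compact sets, satisfies μ({0}) = 0, and is homogeneous of degree d, and let F : E → ℝ be a positive 1-homogeneous function. Let n_F be the polar measure of μ on the cross-section X_F = F⁻¹({1}). Then n_F(X_F) = d · μ({x ∈ E : F(x) ≤ 1}). -/
/-!
Since `μ {0} = 0`, the mass `μ {F ≤ 1}` is computed by the polar decomposition as the mass, for
`t ^ (d - 1) dt ⊗ n`, of the pairs `(t, x)` with `F (t • x) ≤ 1`. By homogeneity `F (t • x) = t`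
on the cross-section, so this set is `(0, 1] × X` up to a null set, and its mass is
`(∫₀¹ t ^ (d - 1) dt) * n(X) = n(X) / d`.
-/

open MeasureTheory Set Filter Topology Pointwise

noncomputable section

variable {E : Type*} [NormedAddCommGroup E] [NormedSpace ℝ E]

/-- A Borel measure `μ` on `E` is *homogeneous of degree `d`* if
`μ(t • A) = t ^ d * μ(A)` for all `t > 0` and all Borel sets `A`. -/
def IsHomogeneousMeasure [MeasurableSpace E] (μ : Measure E) (d : ℝ) : Prop :=
  ∀ t : ℝ, 0 < t → ∀ A : Set E, MeasurableSet A →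
    μ (t • A) = ENNReal.ofReal (t ^ d) * μ A

/-- A function `F : E → ℝ` is a *positive 1-homogeneous function* if it is
continuous, positive away from `0`, and satisfies `F (t • x) = t * F x` for all
`t > 0`. -/
def IsPosHomogeneousFn (F : E → ℝ) : Prop :=
  Continuous F ∧ (∀ x : E, x ≠ 0 → 0 < F x) ∧
    ∀ t : ℝ, 0 < t → ∀ x : E, F (t • x) = t * F x

/-- The measure `t ^ (d-1) dt` on `(0, ∞)`. -/
def radialMeasure (d : ℝ) : Measure ℝ :=
  (volume.restrict (Set.Ioi (0 : ℝ))).withDensity fun t => ENNReal.ofReal (t ^ (d - 1))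

/-- `n` is a *polar measure* for `μ` on the cross-section `X` if `n` is a finite
Borel measure on `X` such that the pushforward under `(t, x) ↦ t • x` of the
product of `t ^ (d-1) dt` on `(0, ∞)` with `n` is the restriction of `μ` to
`E \ {0}`. -/
def IsPolarMeasure [MeasurableSpace E] (μ : Measure E) (d : ℝ) (X : Set E)
    (n : Measure X) : Prop :=
  IsFiniteMeasure n ∧
    Measure.map (fun p : ℝ × X => p.1 • (p.2 : E)) ((radialMeasure d).prod n)
      = μ.restrict {(0 : E)}ᶜ


theorem radialMeasure_Iic_one (d : ℝ) (hd : 0 < d) :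
    radialMeasure d (Iic 1) = ENNReal.ofReal (1 / d) := by
  have hint : IntegrableOn (fun t : ℝ => t ^ (d - 1)) (Ioc 0 1) volume :=
    (intervalIntegrable_iff_integrableOn_Ioc_of_le zero_le_one).1
      (intervalIntegral.intervalIntegrable_rpow' (by linarith))
  rw [radialMeasure, withDensity_apply _ measurableSet_Iic,
    Measure.restrict_restrict measurableSet_Iic, inter_comm, Ioi_inter_Iic,
    ← ofReal_integral_eq_lintegral_ofReal hint
      ((ae_restrict_mem measurableSet_Ioc).mono fun t ht => Real.rpow_nonneg ht.1.le _),
    ← intervalIntegral.integral_of_le zero_le_one, integral_rpow (Or.inl (by linarith))]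
  simp [hd.ne']

theorem ae_pos_radialMeasure (d : ℝ) : ∀ᵐ t ∂(radialMeasure d), 0 < t :=
  (withDensity_absolutelyContinuous _ _).ae_le (ae_restrict_mem measurableSet_Ioi)

/-- (Equation (3.3) of the paper.) If `n_F` is the polar
measure of `μ` on the cross-section `X_F = F⁻¹({1})` of a positive
1-homogeneous function `F`, then `n_F(X_F) = d · μ({F ≤ 1})`. -/
theorem polarMeasure_total_mass
    [FiniteDimensional ℝ E] [MeasurableSpace E] [BorelSpace E]
    (d : ℝ) (hd : 0 < d) (μ : Measure E) [IsFiniteMeasureOnCompacts μ]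
    (hzero : μ {(0 : E)} = 0) (hhom : IsHomogeneousMeasure μ d)
    (F : E → ℝ) (hF : IsPosHomogeneousFn F)
    (n : Measure (F ⁻¹' {1} : Set E)) (hn : IsPolarMeasure μ d (F ⁻¹' {1}) n) :
    n Set.univ = ENNReal.ofReal d * μ {x : E | F x ≤ 1} := by
  obtain ⟨hfin, hmap⟩ := hn
  obtain ⟨hcont, -, hsmul⟩ := hF
  have : ProperSpace E := FiniteDimensional.proper ℝ E
  have hS : MeasurableSet {x : E | F x ≤ 1} := (isClosed_le hcont continuous_const).measurableSet
  have hpolar : Measurable fun p : ℝ × (F ⁻¹' {1} : Set E) => p.1 • (p.2 : E) :=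
    measurable_fst.smul (measurable_subtype_coe.comp measurable_snd)
  have : SFinite (radialMeasure d) := by unfold radialMeasure; infer_instance
  have hrestrict : μ.restrict {(0 : E)}ᶜ = μ :=
    Measure.restrict_eq_self_of_ae_mem (by rw [ae_iff]; simpa using hzero)
  have hmass : μ {x : E | F x ≤ 1} = ENNReal.ofReal (1 / d) * n univ := by
    rw [← radialMeasure_Iic_one d hd, ← Measure.prod_prod, ← hrestrict, ← hmap,
      Measure.map_apply hpolar hS]
    apply measure_congr
    filter_upwards [Measure.quasiMeasurePreserving_fst.ae (ae_pos_radialMeasure d)]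
      with p hp
    have hx : F (p.2 : E) = 1 := p.2.2
    apply propext
    change F (p.1 • (p.2 : E)) ≤ 1 ↔ p ∈ Iic (1 : ℝ) ×ˢ univ
    simp [hsmul p.1 hp, hx]
  rw [hmass, ← mul_assoc, ← ENNReal.ofReal_mul hd.le, mul_one_div_cancel hd.ne',
    ENNReal.ofReal_one, one_mul]
end
end

section
/- Let E be a finite-dimensional real normed vector space, d > 0, μ a Borel measure on E that is finite on compact sets, satisfies μ({0}) = 0, and is homogeneous of degree d, F : E → ℝ a positive 1-homogeneous function, C ≥ 0 a real number, and (x_i)_{i ∈ ℕ} a sequence in E such that {i : F(x_i) ≤ R} is finite for every R > 0. Assume that for every continuous function g : E → ℝ with compact support contained in E \ {0}, lim_{L → ∞} L^{−d} Σ_{i ∈ ℕ} g(L^{−1} • x_i) = C · ∫_E g dμ. Then for every continuous function h : E → ℝ satisfying h(t • x) = t · h(x) for all t > 0 and x ∈ E, lim_{L → ∞} L^{−(d+1)} Σ_{i : F(x_i) ≤ L} h(x_i) = C · ∫_{{x : F(x) ≤ 1}} h dμ. -/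
/-!
Since `h` is 1-homogeneous, the quantity in question is the integral of `h · 1_{F ≤ 1}` against the
rescaled counting measure `ν_L = L ^ (-d) * ∑ i, δ_{x i / L}` (`scaledSum`). The test function
`h · 1_{F ≤ 1}` fails to be admissible for two reasons: it jumps across `{F = 1}`, and its support
contains `0`. It is replaced by `g_δ = h · trapezoid δ ∘ F`, which is admissible
(`shell_support`). As `|h| ≤ M * F` (`IsPosHomogeneousFn.exists_bound`), the error is pointwise at
most `2 * M * δ` on `{F ≤ 1}` plus `2 * M` times a tent around `{F = 1}` (`cutoff_error`).

The first error term is uniformly small because `ν_L {F ≤ 1}` is bounded in `L`: shells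
`{1 / 2 ≤ F ≤ 1}` have bounded `ν_L`-mass by convergence, and the masses of their dyadic dilates
add up as a geometric series since `d > 0` (`doubling_bound`, `exists_count_bound`). The second is
small in the limit because `μ {F = 1} = 0`, by homogeneity (`measure_level_one`). Dominated
convergence gives `∫ g_δ dμ → ∫_{F ≤ 1} h dμ` as `δ → 0`.
-/

open MeasureTheory Set Filter Topology Pointwise

noncomputable section

variable {E : Type*} [NormedAddCommGroup E] [NormedSpace ℝ E]

/-! ### Rescaled counting measures and cutoff functions -/

/-- The integral of `G` against the rescaled counting measure
`L ^ (-d) * ∑ i, δ_{x i / L}`; used only for `G` with finitely many nonzero terms. -/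
def scaledSum (d : ℝ) (x : ℕ → E) (L : ℝ) (G : E → ℝ) : ℝ :=
  L ^ (-d) * ∑' i : ℕ, G (L⁻¹ • x i)

/-- Trapezoidal cutoff: `0` outside `[δ, 1 + δ]` and `1` on `[2 * δ, 1]`. -/
def trapezoid (δ s : ℝ) : ℝ :=
  max 0 (min 1 (min (s / δ - 1) ((1 + δ - s) / δ)))

/-- Tent centred at `1`, supported on `[1 - 2 * δ, 1 + 2 * δ]` and at least `1` on
`[1 - δ, 1 + δ]`. -/
def tent (δ s : ℝ) : ℝ := max 0 (2 - |s - 1| / δ)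

lemma trapezoid_nonneg (δ s : ℝ) : 0 ≤ trapezoid δ s := le_max_left _ _

lemma trapezoid_le_one (δ s : ℝ) : trapezoid δ s ≤ 1 :=
  max_le zero_le_one (min_le_left _ _)

lemma trapezoid_eq_one {δ s : ℝ} (hδ : 0 < δ) (h1 : 2 * δ ≤ s) (h2 : s ≤ 1) :
    trapezoid δ s = 1 := by
  have e1 : 1 ≤ s / δ - 1 := by
    have : 2 ≤ s / δ := by rwa [le_div_iff₀ hδ]
    linarith
  have e2 : 1 ≤ (1 + δ - s) / δ := by rw [le_div_iff₀ hδ]; linarith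
  rw [trapezoid, min_eq_left (le_min e1 e2), max_eq_right zero_le_one]

lemma trapezoid_eq_zero_of_le {δ s : ℝ} (hδ : 0 < δ) (h1 : s ≤ δ) : trapezoid δ s = 0 := by
  have e1 : s / δ - 1 ≤ 0 := by
    have : s / δ ≤ 1 := by rwa [div_le_one hδ]
    linarith
  exact max_eq_left ((min_le_right _ _).trans ((min_le_left _ _).trans e1))

lemma trapezoid_eq_zero_of_ge {δ s : ℝ} (hδ : 0 < δ) (h1 : 1 + δ ≤ s) : trapezoid δ s = 0 := by
  have e1 : (1 + δ - s) / δ ≤ 0 := div_nonpos_of_nonpos_of_nonneg (by linarith) hδ.le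
  exact max_eq_left ((min_le_right _ _).trans ((min_le_right _ _).trans e1))

lemma continuous_trapezoid (δ : ℝ) : Continuous (trapezoid δ) := by
  unfold trapezoid; fun_prop

lemma tent_nonneg (δ s : ℝ) : 0 ≤ tent δ s := le_max_left _ _

lemma tent_le_two {δ : ℝ} (hδ : 0 < δ) (s : ℝ) : tent δ s ≤ 2 :=
  max_le zero_le_two (by have : 0 ≤ |s - 1| / δ := by positivity
                         linarith)

lemma one_le_tent {δ s : ℝ} (hδ : 0 < δ) (h : |s - 1| ≤ δ) : 1 ≤ tent δ s := by
  have : |s - 1| / δ ≤ 1 := by rwa [div_le_one hδ]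
  exact le_max_of_le_right (by linarith)

lemma tent_eq_zero {δ s : ℝ} (hδ : 0 < δ) (h : 2 * δ ≤ |s - 1|) : tent δ s = 0 := by
  have : 2 ≤ |s - 1| / δ := by rwa [le_div_iff₀ hδ]
  exact max_eq_left (by linarith)

lemma continuous_tent (δ : ℝ) : Continuous (tent δ) := by
  unfold tent; fun_prop

/-- Cutting off sharply at `1` differs from the trapezoidal cutoff, when weighted by `s`, by a term
of size `δ` near `0` and a tent concentrated near `1`. -/
lemma cutoff_error {δ s : ℝ} (hδ : 0 < δ) (hδ' : δ ≤ 1 / 4) (hs : 0 ≤ s) :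
    |(if s ≤ 1 then 1 else 0) - trapezoid δ s| * s
      ≤ 2 * δ * (if s ≤ 1 then 1 else 0) + 2 * tent δ s := by
  have t0 := tent_nonneg δ s
  have p0 := trapezoid_nonneg δ s
  have p1 := trapezoid_le_one δ s
  split_ifs with h1
  · rcases le_total (2 * δ) s with h2 | h2
    · rw [trapezoid_eq_one hδ h2 h1]
      simp only [sub_self, abs_zero, zero_mul]; positivity
    · rw [abs_of_nonneg (by linarith)]
      nlinarith
  · push Not at h1
    rcases le_total (1 + δ) s with h2 | h2
    · rw [trapezoid_eq_zero_of_ge hδ h2]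
      simp only [sub_self, abs_zero, zero_mul]; positivity
    · have := one_le_tent hδ (s := s) (by rw [abs_of_pos (by linarith)]; linarith)
      rw [zero_sub, abs_neg, abs_of_nonneg p0]
      nlinarith

/-! ### Homogeneous functions and homogeneous measures -/

lemma IsPosHomogeneousFn.map_zero {F : E → ℝ} (hF : IsPosHomogeneousFn F) : F 0 = 0 := by
  have := hF.2.2 2 two_pos 0
  rw [smul_zero] at this; linarith

lemma IsPosHomogeneousFn.nonneg {F : E → ℝ} (hF : IsPosHomogeneousFn F) (y : E) : 0 ≤ F y := by
  rcases eq_or_ne y 0 with rfl | hy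
  · exact hF.map_zero.ge
  · exact (hF.2.1 y hy).le

/-- By compactness of the unit sphere, a positive 1-homogeneous function dominates every continuous
1-homogeneous function. -/
lemma IsPosHomogeneousFn.exists_bound [FiniteDimensional ℝ E] {F : E → ℝ}
    (hF : IsPosHomogeneousFn F) {G : E → ℝ} (hG : Continuous G)
    (hGh : ∀ t : ℝ, 0 < t → ∀ y : E, G (t • y) = t * G y) :
    ∃ M : ℝ, 0 ≤ M ∧ ∀ y, |G y| ≤ M * F y := by
  have : ProperSpace E := FiniteDimensional.proper_real E
  have hpos : ∀ y ∈ Metric.sphere (0 : E) 1, 0 < F y := fun y hy =>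
    hF.2.1 y (ne_zero_of_mem_unit_sphere ⟨y, hy⟩)
  obtain ⟨M, hM⟩ := (isCompact_sphere (0 : E) 1).exists_bound_of_continuousOn
    (f := fun y => G y / F y)
    (hG.continuousOn.div hF.1.continuousOn fun y hy => (hpos y hy).ne')
  refine ⟨max M 0, le_max_right _ _, fun y => ?_⟩
  rcases eq_or_ne y 0 with rfl | hy
  · have h2 := hGh 2 two_pos 0
    rw [smul_zero] at h2
    have : G 0 = 0 := by linarith
    simp [this, hF.map_zero]
  · have hn : 0 < ‖y‖ := norm_pos_iff.2 hy
    have hmem : ‖y‖⁻¹ • y ∈ Metric.sphere (0 : E) 1 := by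
      rw [mem_sphere_zero_iff_norm, norm_smul, norm_inv, norm_norm, inv_mul_cancel₀ hn.ne']
    have := hM _ hmem
    rw [hGh _ (inv_pos.2 hn), hF.2.2 _ (inv_pos.2 hn),
      mul_div_mul_left _ _ (inv_pos.2 hn).ne', Real.norm_eq_abs, abs_div,
      abs_of_pos (hF.2.1 y hy), div_le_iff₀ (hF.2.1 y hy)] at this
    exact this.trans (mul_le_mul_of_nonneg_right (le_max_left _ _) (hF.nonneg y))

lemma IsPosHomogeneousFn.isCompact_sublevel [FiniteDimensional ℝ E] {F : E → ℝ}
    (hF : IsPosHomogeneousFn F) (R : ℝ) : IsCompact {y | F y ≤ R} := by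
  have : ProperSpace E := FiniteDimensional.proper_real E
  obtain ⟨M, hM0, hM⟩ := hF.exists_bound (G := fun y => ‖y‖) continuous_norm
    (fun t ht y => by rw [norm_smul, Real.norm_of_nonneg ht.le])
  refine (isCompact_closedBall (0 : E) (M * R)).of_isClosed_subset
    (isClosed_le hF.1 continuous_const) fun y hy => ?_
  rw [mem_closedBall_zero_iff]
  have := hM y
  rw [abs_norm] at this
  exact this.trans (mul_le_mul_of_nonneg_left hy hM0)

/-- All level sets `{F = t}`, `t > 0`, are dilates of each other, and only countably many of them
can have positive measure. -/
lemma measure_level_one [FiniteDimensional ℝ E] [MeasurableSpace E] [BorelSpace E]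
    {d : ℝ} {μ : Measure E} [IsFiniteMeasureOnCompacts μ] (hhom : IsHomogeneousMeasure μ d)
    {F : E → ℝ} (hF : IsPosHomogeneousFn F) : μ {y | F y = 1} = 0 := by
  have : ProperSpace E := FiniteDimensional.proper_real E
  have : SecondCountableTopology E := inferInstance
  have : IsLocallyFiniteMeasure μ := isLocallyFiniteMeasure_of_isFiniteMeasureOnCompacts
  have hc : {t : ℝ | 0 < μ {y | F y = t}}.Countable :=
    Measure.countable_meas_level_set_pos hF.1.measurable
  obtain ⟨t, ht, ht0⟩ : ∃ t ∈ Ioi (0 : ℝ), t ∉ {t : ℝ | 0 < μ {y | F y = t}} := by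
    by_contra! hcon
    have h1 := Cardinal.mk_Ioi_real (0 : ℝ)
    have h2 := Cardinal.le_aleph0_iff_set_countable.2 (hc.mono hcon)
    rw [h1] at h2
    exact absurd h2 (not_le.2 Cardinal.aleph0_lt_continuum)
  rw [mem_Ioi] at ht
  have hset : t • {y | F y = 1} = {y | F y = t} := by
    ext y
    rw [mem_smul_set_iff_inv_smul_mem₀ ht.ne', mem_ofPred_eq, mem_ofPred_eq,
      hF.2.2 _ (inv_pos.2 ht), inv_mul_eq_one₀ ht.ne', eq_comm]
  have h1 := hhom t ht {y | F y = 1} (hF.1.measurable (measurableSet_singleton 1))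
  have h2 : μ {y | F y = t} = 0 := by simpa using ht0
  rw [hset, h2, eq_comm, mul_eq_zero] at h1
  refine h1.resolve_left ?_
  rw [ENNReal.ofReal_eq_zero, not_le]
  exact Real.rpow_pos_of_pos ht d

/-! ### Counting estimates -/

/-- `L ^ (-d) * N L` stays bounded if passing from `L / 2` to `L` adds at most `K * L ^ d`. -/
lemma doubling_bound {d : ℝ} (hd : 0 < d) {N : ℝ → ℝ} (hmono : Monotone N)
    {K L₀ : ℝ} (hL₀ : 0 < L₀) (hK : 0 ≤ K) (hN0 : 0 ≤ N L₀)
    (hstep : ∀ L, L₀ ≤ L → N L ≤ N (L / 2) + K * L ^ d) :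
    ∃ B, 0 ≤ B ∧ ∀ᶠ L in atTop, L ^ (-d) * N L ≤ B := by
  have h2d : 1 < (2 : ℝ) ^ d := Real.one_lt_rpow one_lt_two hd
  -- `A` solves `A * 2 ^ (-d) + K = A`, which makes the induction close up.
  set A : ℝ := K * 2 ^ d / (2 ^ d - 1) with hA
  have hA0 : 0 ≤ A := by
    have : 0 < (2 : ℝ) ^ d - 1 := by linarith
    positivity
  have hAeq : A / 2 ^ d + K = A := by
    have h1 : (2 : ℝ) ^ d - 1 ≠ 0 := by linarith
    have h2 : (2 : ℝ) ^ d ≠ 0 := by linarith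
    rw [hA]; field_simp; ring
  have key : ∀ n : ℕ, ∀ L, 0 < L → L ≤ 2 ^ n * L₀ → N L ≤ N L₀ + A * L ^ d := by
    intro n
    induction n with
    | zero =>
      intro L hL hle
      have := hmono (show L ≤ L₀ by simpa using hle)
      have : 0 ≤ A * L ^ d := by positivity
      linarith
    | succ n ih =>
      intro L hL hle
      rcases le_total L L₀ with h | h
      · have := hmono h
        have : 0 ≤ A * L ^ d := by positivity
        linarith
      · have h1 := ih (L / 2) (by linarith) (by rw [pow_succ] at hle; linarith)
        have h2 := hstep L h
        rw [Real.div_rpow hL.le two_pos.le] at h1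
        have h3 : A * (L ^ d / 2 ^ d) + K * L ^ d = A * L ^ d := by
          conv_rhs => rw [← hAeq]
          ring
        linarith
  refine ⟨N L₀ + A, by positivity, ?_⟩
  filter_upwards [eventually_ge_atTop 1] with L hL
  have hL0 : 0 < L := by linarith
  obtain ⟨n, hn⟩ := pow_unbounded_of_one_lt (L / L₀) one_lt_two
  have h1 := key n L hL0 (by rw [div_lt_iff₀ hL₀] at hn; exact hn.le)
  have h2 : 1 ≤ L ^ d := Real.one_le_rpow hL hd.le
  have h3 : 0 < L ^ (-d) := Real.rpow_pos_of_pos hL0 _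
  have h4 : L ^ (-d) * L ^ d = 1 := by rw [← Real.rpow_add hL0]; simp
  have h5 : N L ≤ (N L₀ + A) * L ^ d := by nlinarith
  calc L ^ (-d) * N L ≤ L ^ (-d) * ((N L₀ + A) * L ^ d) := by gcongr
    _ = (N L₀ + A) * (L ^ (-d) * L ^ d) := by ring
    _ = _ := by rw [h4, mul_one]

/-- Pointwise bounds integrate against the rescaled counting measure. Vanishing on `{2 < F}` makes
all the sums finite. -/
lemma scaledSum_error {d : ℝ} {F : E → ℝ} (hF : IsPosHomogeneousFn F) {x : ℕ → E}
    (hfin : ∀ R : ℝ, 0 < R → {i : ℕ | F (x i) ≤ R}.Finite) {L : ℝ} (hL : 0 < L)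
    {G₁ G₂ G₃ G₄ : E → ℝ} {a b : ℝ}
    (h₁ : ∀ y, 2 < F y → G₁ y = 0) (h₂ : ∀ y, 2 < F y → G₂ y = 0)
    (h₃ : ∀ y, 2 < F y → G₃ y = 0) (h₄ : ∀ y, 2 < F y → G₄ y = 0)
    (hle : ∀ y, |G₁ y - G₂ y| ≤ a * G₃ y + b * G₄ y) :
    |scaledSum d x L G₁ - scaledSum d x L G₂|
      ≤ a * scaledSum d x L G₃ + b * scaledSum d x L G₄ := by
  set S := (hfin (2 * L) (by positivity)).toFinset with hS
  have hsum : ∀ G : E → ℝ, (∀ y, 2 < F y → G y = 0) →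
      scaledSum d x L G = L ^ (-d) * ∑ i ∈ S, G (L⁻¹ • x i) := by
    intro G hG
    rw [scaledSum, tsum_eq_sum]
    intro i hi
    apply hG
    rw [hF.2.2 _ (inv_pos.2 hL), inv_mul_eq_div, lt_div_iff₀ hL]
    simpa [hS] using hi
  have hp : 0 < L ^ (-d) := Real.rpow_pos_of_pos hL _
  rw [hsum _ h₁, hsum _ h₂, hsum _ h₃, hsum _ h₄, ← mul_sub, ← Finset.sum_sub_distrib, abs_mul,
    abs_of_pos hp]
  calc L ^ (-d) * |∑ i ∈ S, (G₁ (L⁻¹ • x i) - G₂ (L⁻¹ • x i))|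
      ≤ L ^ (-d) * ∑ i ∈ S, (a * G₃ (L⁻¹ • x i) + b * G₄ (L⁻¹ • x i)) := by
        gcongr
        exact (Finset.abs_sum_le_sum_abs _ _).trans (Finset.sum_le_sum fun i _ => hle _)
    _ = _ := by
        rw [Finset.sum_add_distrib, ← Finset.mul_sum, ← Finset.mul_sum]; ring

/-- Functions supported in a shell `{a ≤ F ≤ 2}`, `a > 0`, are admissible test functions for the
convergence hypothesis. -/
lemma shell_support [FiniteDimensional ℝ E] {F : E → ℝ} (hF : IsPosHomogeneousFn F)
    {g : E → ℝ} {a : ℝ} (ha : 0 < a) (h1 : ∀ y, F y < a → g y = 0)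
    (h2 : ∀ y, 2 < F y → g y = 0) : HasCompactSupport g ∧ tsupport g ⊆ {(0 : E)}ᶜ := by
  have hsub : tsupport g ⊆ {y | F y ≤ 2} ∩ {y | a ≤ F y} := by
    refine closure_minimal (fun y hy => ⟨?_, ?_⟩)
      ((isClosed_le hF.1 continuous_const).inter (isClosed_le continuous_const hF.1))
    · exact not_lt.1 fun h => hy (h2 y h)
    · exact not_lt.1 fun h => hy (h1 y h)
  refine ⟨(hF.isCompact_sublevel 2).of_isClosed_subset (isClosed_tsupport g)
    (hsub.trans inter_subset_left), fun y hy h0 => ?_⟩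
  rw [mem_singleton_iff.1 h0] at hy
  have : a ≤ F 0 := (hsub hy).2
  rw [hF.map_zero] at this
  linarith

/-- The rescaled number of points in `{F ≤ L}` is bounded: the shells `{L / 2 < F ≤ L}` are
controlled by a test function, and the bounds are summed dyadically. -/
lemma exists_count_bound [FiniteDimensional ℝ E]
    {d : ℝ} (hd : 0 < d) {F : E → ℝ} (hF : IsPosHomogeneousFn F) {x : ℕ → E}
    (hfin : ∀ R : ℝ, 0 < R → {i : ℕ | F (x i) ≤ R}.Finite)
    (hconv : ∀ g : E → ℝ, Continuous g → HasCompactSupport g → tsupport g ⊆ {(0 : E)}ᶜ →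
      ∃ l, Tendsto (fun L : ℝ => scaledSum d x L g) atTop (𝓝 l)) :
    ∃ B, 0 ≤ B ∧
      ∀ᶠ L in atTop, scaledSum d x L (fun y => if F y ≤ 1 then 1 else 0) ≤ B := by
  set N : ℝ → ℝ := fun R => ∑' i, if F (x i) ≤ R then (1 : ℝ) else 0 with hN
  have hsm : ∀ R, Summable fun i => if F (x i) ≤ R then (1 : ℝ) else 0 := fun R =>
    summable_of_hasFiniteSupport <| (hfin (max R 1) (by positivity)).subset fun i hi => by
      have : F (x i) ≤ R := by by_contra h; simp [h] at hi
      exact this.trans (le_max_left _ _)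
  have hmono : Monotone N := fun R R' hR => by
    refine (hsm R).tsum_le_tsum (fun i => ?_) (hsm R')
    split_ifs with h1 h2 h2
    · exact le_rfl
    · exact absurd (h1.trans hR) h2
    · exact zero_le_one
    · exact le_rfl
  have hN0 : ∀ R, 0 ≤ N R := fun R => tsum_nonneg fun i => by split_ifs <;> norm_num
  have hscale : ∀ L, 0 < L → ∀ r, scaledSum d x L (fun y => if F y ≤ r then 1 else 0)
      = L ^ (-d) * N (r * L) := by
    intro L hL r
    simp only [scaledSum, hN, hF.2.2 _ (inv_pos.2 hL), inv_mul_eq_div, div_le_iff₀ hL]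
  -- A tent in `F` that is at least `1` on `[1 / 2, 1]` and vanishes off `[1 / 4, 5 / 4]`.
  set w : E → ℝ := fun y => max 0 (2 - 4 * |F y - 3 / 4|) with hw
  have hFc := hF.1
  have hwz : ∀ y, 1 / 2 ≤ |F y - 3 / 4| → w y = 0 := fun y hy => max_eq_left (by linarith)
  have hw1 : ∀ y, F y < 1 / 4 → w y = 0 := fun y hy =>
    hwz y (by rw [abs_of_neg (by linarith)]; linarith)
  have hw2 : ∀ y, 2 < F y → w y = 0 := fun y hy =>
    hwz y (by rw [abs_of_pos (by linarith)]; linarith)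
  obtain ⟨hs1, hs2⟩ := shell_support hF (g := w) (a := 1 / 4) (by norm_num) hw1 hw2
  obtain ⟨l, hl⟩ := hconv w (by rw [hw]; fun_prop) hs1 hs2
  obtain ⟨L₁, hL₁⟩ := eventually_atTop.1 (hl.eventually_le_const (lt_add_one l))
  obtain ⟨B, hB0, hB⟩ := doubling_bound hd hmono (K := max (l + 1) 0) (L₀ := max L₁ 1)
    (by positivity) (le_max_right _ _) (hN0 _) (by
      intro L hL
      have hL0 : 0 < L := lt_of_lt_of_le (by positivity) hL
      have h1 := scaledSum_error (d := d) hF hfin hL0 (a := 1) (b := 1)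
        (G₁ := fun y => if F y ≤ 1 then 1 else 0) (G₂ := fun _ => 0)
        (G₃ := fun y => if F y ≤ 1 / 2 then 1 else 0) (G₄ := w)
        (fun y hy => if_neg (by linarith)) (fun _ _ => rfl)
        (fun y hy => if_neg (by linarith)) hw2 (by
          intro y
          have hw0 : 0 ≤ w y := le_max_left _ _
          by_cases h1 : F y ≤ 1 / 2
          · simp only [h1, h1.trans (by norm_num : (1 / 2 : ℝ) ≤ 1), if_true]
            norm_num; exact hw0
          · by_cases h2 : F y ≤ 1
            · simp only [h1, h2, if_true, if_false]
              have : |F y - 3 / 4| ≤ 1 / 4 := abs_le.2 ⟨by linarith, by linarith⟩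
              have : 1 ≤ w y := le_max_of_le_right (by linarith)
              norm_num; exact this
            · simp only [h1, h2, if_false]
              norm_num; exact hw0)
      have h0 : scaledSum d x L (fun _ => (0 : ℝ)) = 0 := by simp [scaledSum]
      rw [hscale L hL0, hscale L hL0, h0, sub_zero, one_mul, one_mul, one_mul] at h1
      have h2 := (le_abs_self _).trans h1
      have h3 : scaledSum d x L w ≤ max (l + 1) 0 :=
        (hL₁ L ((le_max_left _ _).trans hL)).trans (le_max_left _ _)
      have hp : 0 < L ^ d := Real.rpow_pos_of_pos hL0 _
      rw [Real.rpow_neg hL0.le] at h2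
      have h4 : (L ^ d)⁻¹ * N L ≤ (L ^ d)⁻¹ * N (1 / 2 * L) + max (l + 1) 0 := by linarith
      have h5 := mul_le_mul_of_nonneg_left h4 hp.le
      rw [mul_add, mul_inv_cancel_left₀ hp.ne', mul_inv_cancel_left₀ hp.ne'] at h5
      rw [show L / 2 = 1 / 2 * L by ring]
      linarith)
  refine ⟨B, hB0, ?_⟩
  filter_upwards [hB, eventually_gt_atTop 0] with L h hL
  rw [hscale L hL, one_mul]; exact h

/-! ### The asymptotics -/

/-- (Abstract form of Lemma 4.2 of the paper.) Suppose the
rescaled counting measures `L^{-d} Σ_i δ_{x_i / L}` converge weakly-* on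
`E \ {0}` to `C · μ`, where `μ` is homogeneous of degree `d > 0`, finite on
compacts and null at `0`. Then for every continuous function `h` which is
positively homogeneous of degree one,
`L^{-(d+1)} Σ_{F(x_i) ≤ L} h(x_i) → C · ∫_{F ≤ 1} h dμ`. -/
theorem homogeneous_sum_asymptotics
    [FiniteDimensional ℝ E] [MeasurableSpace E] [BorelSpace E]
    (d : ℝ) (hd : 0 < d) (μ : Measure E) [IsFiniteMeasureOnCompacts μ]
    (hzero : μ {(0 : E)} = 0) (hhom : IsHomogeneousMeasure μ d)
    (F : E → ℝ) (hF : IsPosHomogeneousFn F)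
    (C : ℝ) (hC : 0 ≤ C) (x : ℕ → E)
    (hfin : ∀ R : ℝ, 0 < R → {i : ℕ | F (x i) ≤ R}.Finite)
    (hconv : ∀ g : E → ℝ, Continuous g → HasCompactSupport g →
      tsupport g ⊆ {(0 : E)}ᶜ →
      Tendsto (fun L : ℝ => L ^ (-d) * ∑' i : ℕ, g (L⁻¹ • x i)) atTop
        (𝓝 (C * ∫ y, g y ∂μ)))
    (h : E → ℝ) (hcont : Continuous h)
    (hhomog : ∀ t : ℝ, 0 < t → ∀ y : E, h (t • y) = t * h y) :
    Tendsto
      (fun L : ℝ => L ^ (-(d + 1)) * ∑' i : ℕ, if F (x i) ≤ L then h (x i) else 0)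
      atTop (𝓝 (C * ∫ y in {y : E | F y ≤ 1}, h y ∂μ)) := by
  obtain ⟨M, hM0, hM⟩ := hF.exists_bound hcont hhomog
  obtain ⟨B, hB0, hB⟩ := exists_count_bound hd hF hfin
    (fun g h1 h2 h3 => ⟨_, hconv g h1 h2 h3⟩)
  have hFc := hF.1
  set h₁ : E → ℝ := fun y => if F y ≤ 1 then h y else 0 with hh₁
  set g : ℝ → E → ℝ := fun δ y => h y * trapezoid δ (F y) with hg
  set k : ℝ → E → ℝ := fun δ y => tent δ (F y) with hk
  -- Homogeneity of `h` absorbs one power of `L`.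
  have hresc : ∀ L : ℝ, 0 < L →
      L ^ (-(d + 1)) * ∑' i : ℕ, (if F (x i) ≤ L then h (x i) else 0) = scaledSum d x L h₁ := by
    intro L hL
    have : ∀ i, (if F (x i) ≤ L then h (x i) else 0) = L * h₁ (L⁻¹ • x i) := by
      intro i
      simp only [hh₁, hF.2.2 _ (inv_pos.2 hL), hhomog _ (inv_pos.2 hL), inv_mul_eq_div,
        div_le_one hL]
      split_ifs
      · field_simp
      · simp
    simp only [this]
    rw [tsum_mul_left, scaledSum, ← mul_assoc, neg_add, Real.rpow_add hL, Real.rpow_neg_one,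
      inv_mul_cancel_right₀ hL.ne']
  have hg1 : ∀ δ, 0 < δ → ∀ y, F y < δ → g δ y = 0 := fun δ hδ y hy => by
    simp [hg, trapezoid_eq_zero_of_le hδ hy.le]
  have hg2 : ∀ δ, 0 < δ → δ ≤ 1 / 4 → ∀ y, 2 < F y → g δ y = 0 := fun δ hδ hδ' y hy => by
    simp [hg, trapezoid_eq_zero_of_ge hδ (show 1 + δ ≤ F y by linarith)]
  have hk1 : ∀ δ, 0 < δ → δ ≤ 1 / 4 → ∀ y, F y < 1 / 2 → k δ y = 0 := fun δ hδ hδ' y hy =>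
    tent_eq_zero hδ (by rw [abs_of_neg (by linarith)]; linarith)
  have hk2 : ∀ δ, 0 < δ → δ ≤ 1 / 4 → ∀ y, 2 < F y → k δ y = 0 := fun δ hδ hδ' y hy =>
    tent_eq_zero hδ (by rw [abs_of_pos (by linarith)]; linarith)
  have hgc : ∀ δ, Continuous (g δ) := fun δ => hcont.mul ((continuous_trapezoid δ).comp hFc)
  have hkc : ∀ δ, Continuous (k δ) := fun δ => (continuous_tent δ).comp hFc
  have hgT : ∀ δ, 0 < δ → δ ≤ 1 / 4 →
      Tendsto (fun L => scaledSum d x L (g δ)) atTop (𝓝 (C * ∫ y, g δ y ∂μ)) := by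
    intro δ hδ hδ'
    obtain ⟨h1, h2⟩ := shell_support hF hδ (hg1 δ hδ) (hg2 δ hδ hδ')
    exact hconv _ (hgc δ) h1 h2
  have hkT : ∀ δ, 0 < δ → δ ≤ 1 / 4 →
      Tendsto (fun L => scaledSum d x L (k δ)) atTop (𝓝 (C * ∫ y, k δ y ∂μ)) := by
    intro δ hδ hδ'
    obtain ⟨h1, h2⟩ := shell_support hF one_half_pos (hk1 δ hδ hδ') (hk2 δ hδ hδ')
    exact hconv _ (hkc δ) h1 h2
  have herr : ∀ δ, 0 < δ → δ ≤ 1 / 4 → ∀ L, 0 < L →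
      |scaledSum d x L h₁ - scaledSum d x L (g δ)|
        ≤ M * (2 * δ) * scaledSum d x L (fun y => if F y ≤ 1 then 1 else 0)
          + M * 2 * scaledSum d x L (k δ) := by
    intro δ hδ hδ' L hL
    refine scaledSum_error hF hfin hL (fun y hy => if_neg (by linarith)) (hg2 δ hδ hδ')
      (fun y hy => if_neg (by linarith)) (hk2 δ hδ hδ') fun y => ?_
    have e1 : h₁ y - g δ y = h y * ((if F y ≤ 1 then 1 else 0) - trapezoid δ (F y)) := by
      simp only [hh₁, hg, mul_sub, mul_ite, mul_one, mul_zero]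
    have e2 := cutoff_error hδ hδ' (hF.nonneg y)
    rw [e1, abs_mul]
    calc |h y| * |(if F y ≤ 1 then 1 else 0) - trapezoid δ (F y)|
        ≤ M * F y * |(if F y ≤ 1 then 1 else 0) - trapezoid δ (F y)| := by
          gcongr; exact hM y
      _ = M * (|(if F y ≤ 1 then 1 else 0) - trapezoid δ (F y)| * F y) := by ring
      _ ≤ M * (2 * δ * (if F y ≤ 1 then 1 else 0) + 2 * tent δ (F y)) := by gcongr
      _ = _ := by simp only [hk]; ring
  have hmeas : MeasurableSet {y : E | F y ≤ 2} := (isClosed_le hFc continuous_const).measurableSet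
  have hint : ∀ c : ℝ, Integrable ({y : E | F y ≤ 2}.indicator fun _ => c) μ := fun c =>
    (integrable_indicator_iff hmeas).2
      (integrableOn_const (hF.isCompact_sublevel 2).measure_lt_top.ne)
  have hsmall : ∀ᶠ δ : ℝ in 𝓝[>] 0, 0 < δ ∧ δ ≤ 1 / 4 :=
    Ioc_mem_nhdsGT (by norm_num)
  have hlt : ∀ a : ℝ, 0 < a → ∀ᶠ δ : ℝ in 𝓝[>] 0, 0 < δ ∧ δ ≤ a := fun a ha =>
    Ioc_mem_nhdsGT ha
  have hgI : Tendsto (fun δ => ∫ y, g δ y ∂μ) (𝓝[>] 0) (𝓝 (∫ y in {y : E | F y ≤ 1}, h y ∂μ)) := by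
    rw [← integral_indicator (isClosed_le hFc continuous_const).measurableSet]
    refine tendsto_integral_filter_of_dominated_convergence
      ({y : E | F y ≤ 2}.indicator fun _ => M * 2)
      (Eventually.of_forall fun δ => (hgc δ).aestronglyMeasurable) ?_ (hint _) ?_
    · filter_upwards [hsmall] with δ hδ
      refine Eventually.of_forall fun y => ?_
      by_cases hy : F y ≤ 2
      · rw [indicator_of_mem (by exact hy), Real.norm_eq_abs, hg, abs_mul,
          abs_of_nonneg (trapezoid_nonneg _ _)]
        calc |h y| * trapezoid δ (F y) ≤ |h y| * 1 := by
              gcongr; exact trapezoid_le_one _ _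
          _ = |h y| := mul_one _
          _ ≤ M * F y := hM y
          _ ≤ M * 2 := by gcongr
      · rw [indicator_of_notMem (by exact hy), hg2 δ hδ.1 hδ.2 y (not_le.1 hy), norm_zero]
    · refine Eventually.of_forall fun y => tendsto_const_nhds.congr' ?_
      by_cases hy : F y ≤ 1
      · rw [indicator_of_mem (by exact hy)]
        rcases (hF.nonneg y).eq_or_lt with h0 | h0
        · have : h y = 0 := by
            have := hM y
            rw [← h0, mul_zero] at this
            exact abs_nonpos_iff.1 this
          exact Eventually.of_forall fun δ => by simp [hg, this]
        · filter_upwards [hlt (F y / 2) (by linarith)] with δ hδ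
          simp only [hg]
          rw [trapezoid_eq_one hδ.1 (by linarith) hy, mul_one]
      · rw [indicator_of_notMem (by exact hy)]
        filter_upwards [hlt (F y - 1) (by linarith)] with δ hδ
        simp only [hg]
        rw [trapezoid_eq_zero_of_ge hδ.1 (by linarith), mul_zero]
  have hkI : Tendsto (fun δ => ∫ y, k δ y ∂μ) (𝓝[>] 0) (𝓝 0) := by
    suffices hs : Tendsto (fun δ => ∫ y, k δ y ∂μ) (𝓝[>] 0) (𝓝 (∫ _ : E, (0 : ℝ) ∂μ)) by
      simpa using hs
    refine tendsto_integral_filter_of_dominated_convergence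
      ({y : E | F y ≤ 2}.indicator fun _ => 2)
      (Eventually.of_forall fun δ => (hkc δ).aestronglyMeasurable) ?_ (hint _) ?_
    · filter_upwards [hsmall] with δ hδ
      refine Eventually.of_forall fun y => ?_
      by_cases hy : F y ≤ 2
      · rw [indicator_of_mem (by exact hy), Real.norm_of_nonneg (tent_nonneg _ _)]
        exact tent_le_two hδ.1 _
      · rw [indicator_of_notMem (by exact hy), hk2 δ hδ.1 hδ.2 y (not_le.1 hy), norm_zero]
    · have hae : ∀ᵐ y ∂μ, F y ≠ 1 := by
        rw [ae_iff]; simpa using measure_level_one hhom hF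
      filter_upwards [hae] with y hy
      refine tendsto_const_nhds.congr' ?_
      filter_upwards [hlt (|F y - 1| / 2) (half_pos (abs_pos.2 (sub_ne_zero.2 hy)))] with δ hδ
      exact (tent_eq_zero hδ.1 (by linarith)).symm
  refine Tendsto.congr' (f₁ := fun L => scaledSum d x L h₁)
    ((eventually_gt_atTop 0).mono fun L hL => (hresc L hL).symm) ?_
  rw [Metric.tendsto_nhds]
  intro ε hε
  have t1 : Tendsto (fun δ : ℝ => M * (2 * δ) * B + M * 2 * (C * ∫ y, k δ y ∂μ)) (𝓝[>] 0) (𝓝 0) := by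
    have a1 : Tendsto (fun δ : ℝ => M * (2 * δ) * B) (𝓝[>] 0) (𝓝 0) := by
      have : Continuous fun δ : ℝ => M * (2 * δ) * B := by fun_prop
      simpa using (this.tendsto 0).mono_left nhdsWithin_le_nhds
    simpa using a1.add ((hkI.const_mul C).const_mul (M * 2))
  obtain ⟨δ, ⟨hδ, hδ'⟩, hδ1, hδ2⟩ := (hsmall.and
    ((t1.eventually_lt_const (show 0 < ε / 3 by linarith)).and
      (Metric.tendsto_nhds.1 (hgI.const_mul C) (ε / 3) (by linarith)))).exists
  have t2 := ((hkT δ hδ hδ').const_mul (M * 2)).const_add (M * (2 * δ) * B)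
  filter_upwards [eventually_gt_atTop 0, hB, t2.eventually_lt_const hδ1,
    Metric.tendsto_nhds.1 (hgT δ hδ hδ') (ε / 3) (by linarith)] with L hL hBL h2 h3
  have h4 := herr δ hδ hδ' L hL
  have h5 : M * (2 * δ) * scaledSum d x L (fun y => if F y ≤ 1 then 1 else 0)
      ≤ M * (2 * δ) * B := by gcongr
  rw [Real.dist_eq] at *
  have h6 := abs_sub_le (scaledSum d x L h₁) (scaledSum d x L (g δ))
    (C * ∫ y in {y : E | F y ≤ 1}, h y ∂μ)
  have h7 := abs_sub_le (scaledSum d x L (g δ)) (C * ∫ y, g δ y ∂μ)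
    (C * ∫ y in {y : E | F y ≤ 1}, h y ∂μ)
  linarith
end
end
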